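/- Let A be the free associative superalgebra over Z on homogeneous generators with superbracket [a,b] = ab - (-1)^{|a||b|} ba, let L be the Lie sub-superalgebra generated by the generators, and let C be a complete set of basic commutators. Then the set C ∪ {[c,c] : c ∈ C is odd} is linearly independent over Z. -/

import Mathlib

/-- The weight (number of leaves) of a formal bracketing. -/
def FreeMagma.wt {A : Type*} : FreeMagma A → ℕ
  | .of _ => 1
  | .mul s t => s.wt + t.wt

/-- A complete set of basic commutators (as formal bracketings) on an ordered set `A`,
in the sense of P. Hall: the set `B` together with a linear order `le` on it which
extends the order of the generators, places commutators of smaller weight first,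
and such that `[c,d] ∈ B` iff `c, d ∈ B`, `c > d`, and whenever `c = [e,f]`
one has `f ≤ d`. -/
structure HallData (A : Type*) [LinearOrder A] where
  B : Set (FreeMagma A)
  le : FreeMagma A → FreeMagma A → Prop
  le_refl : ∀ t ∈ B, le t t
  le_trans : ∀ s ∈ B, ∀ t ∈ B, ∀ u ∈ B, le s t → le t u → le s u
  le_antisymm : ∀ s ∈ B, ∀ t ∈ B, le s t → le t s → s = t
  le_total : ∀ s ∈ B, ∀ t ∈ B, le s t ∨ le t s
  wt_mono : ∀ s ∈ B, ∀ t ∈ B, s.wt < t.wt → le s t ∧ s ≠ t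
  le_of : ∀ a b : A, le (.of a) (.of b) ↔ a ≤ b
  of_mem : ∀ a : A, FreeMagma.of a ∈ B
  mul_mem : ∀ s t : FreeMagma A, FreeMagma.mul s t ∈ B ↔
    s ∈ B ∧ t ∈ B ∧ (le t s ∧ t ≠ s) ∧ ∀ e f, s = FreeMagma.mul e f → le f t

/-- The `ℤ/2`-degree of a formal bracketing, given degrees of the generators. -/
def degm {A : Type*} (deg : A → ZMod 2) : FreeMagma A → ZMod 2
  | .of a => deg a
  | .mul s t => degm deg s + degm deg t

/-- Evaluation of a formal bracketing in the free associative superalgebra over `ℤ`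
via the superbracket `[a,b] = ab - (-1)^{|a||b|} ba`. -/
def evalA {A : Type*} (deg : A → ZMod 2) : FreeMagma A → FreeAlgebra ℤ A
  | .of a => FreeAlgebra.ι ℤ a
  | .mul s t => evalA deg s * evalA deg t -
      ((-1 : ℤ) ^ ((degm deg s).val * (degm deg t).val)) • (evalA deg t * evalA deg s)

/-!
Let `c` be the least commutator in a linear relation, and work inside a finite set of basic
commutators that contains the factors of its brackets. By Lazard elimination, applied in turn to
the commutators smaller than `c`, those commutators `≥ c` that are not brackets of two commutators
`≥ c` generate a free subalgebra freely. One of these generators is `c`. Every `d > c` is another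
generator or a bracket `[e, f]` with `e > f ≥ c`, so by induction the homomorphism from the free
subalgebra to `ℤ[X]` that sends `c` to `X` and the other generators to `0` kills `d`. Hence the
positive powers of the basic commutators are linearly independent, and `[c, c] = 2 c ^ 2` for odd
`c`.
-/

section IsFreeFamily

variable {R B C ι κ : Type*} [CommSemiring R] [Semiring B] [Algebra R B] [Semiring C] [Algebra R C]

variable (R) in
/-- A family in an `R`-algebra that freely generates the subalgebra it generates; the
noncommutative analogue of `AlgebraicIndependent`. -/
def IsFreeFamily (v : ι → B) : Prop :=
  Function.Injective (FreeAlgebra.lift R v)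

theorem isFreeFamily_ι : IsFreeFamily R (FreeAlgebra.ι R : ι → FreeAlgebra R ι) := by
  have lift_ι : FreeAlgebra.lift R (FreeAlgebra.ι R : ι → FreeAlgebra R ι) = .id R _ := by
    ext; simp
  simpa only [IsFreeFamily, lift_ι, AlgHom.coe_id] using Function.injective_id

namespace IsFreeFamily

variable {v : ι → B}

theorem map (hv : IsFreeFamily R v) {φ : B →ₐ[R] C} (hφ : Function.Injective φ) :
    IsFreeFamily R (φ ∘ v) := by
  have lift_comp : FreeAlgebra.lift R (φ ∘ v) = φ.comp (FreeAlgebra.lift R v) := by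
    ext; simp
  simpa only [IsFreeFamily, lift_comp, AlgHom.coe_comp] using hφ.comp hv

theorem comp (hv : IsFreeFamily R v) {f : κ → ι} (hf : Function.Injective f) :
    IsFreeFamily R (v ∘ f) := by
  have retraction : (FreeAlgebra.lift R (Function.extend f (FreeAlgebra.ι R) 0)).comp
      (FreeAlgebra.lift R (FreeAlgebra.ι R ∘ f)) = .id R (FreeAlgebra R κ) := by
    ext; simp [hf.extend_apply]
  have lift_ι_comp : Function.Injective (FreeAlgebra.lift R (FreeAlgebra.ι R ∘ f)) :=
    Function.LeftInverse.injective (DFunLike.congr_fun retraction)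
  have lift_comp : FreeAlgebra.lift R (v ∘ f) =
      (FreeAlgebra.lift R v).comp (FreeAlgebra.lift R (FreeAlgebra.ι R ∘ f)) := by
    ext; simp
  simpa only [IsFreeFamily, lift_comp, AlgHom.coe_comp] using Function.Injective.comp hv lift_ι_comp

end IsFreeFamily

end IsFreeFamily

theorem exists_skewDerivation {R ι : Type*} [CommSemiring R]
    (σ : FreeAlgebra R ι →ₐ[R] FreeAlgebra R ι) (δ : ι → FreeAlgebra R ι) :
    ∃ D : FreeAlgebra R ι →ₗ[R] FreeAlgebra R ι, (∀ i, D (FreeAlgebra.ι R i) = δ i) ∧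
      ∀ a b, D (a * b) = a * D b + D a * σ b := by
  -- `D` is the upper right entry of the homomorphism `M` into upper triangular `2 × 2` matrices.
  let M : FreeAlgebra R ι →ₐ[R] Matrix (Fin 2) (Fin 2) (FreeAlgebra R ι) :=
    FreeAlgebra.lift R fun i => !![FreeAlgebra.ι R i, δ i; 0, σ (FreeAlgebra.ι R i)]
  have triangular (a : FreeAlgebra R ι) : M a 0 0 = a ∧ M a 1 0 = 0 ∧ M a 1 1 = σ a := by
    induction a using FreeAlgebra.induction with
    | grade0 r => simp [AlgHom.commutes, Matrix.algebraMap_matrix_apply]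
    | grade1 i => simp [M]
    | mul a b ha hb => simp [Matrix.mul_apply, Fin.sum_univ_two, ha, hb]
    | add a b ha hb => simp [ha, hb]
  refine ⟨Matrix.entryLinearMap R _ 0 1 ∘ₗ M.toLinearMap, fun i => ?_, fun a b => ?_⟩
  · simp [M]
  · simp [Matrix.mul_apply, Fin.sum_univ_two, triangular]

section LazardElimination

variable {R B C ι : Type*} [CommRing R] [Ring B] [Algebra R B] [Ring C] [Algebra R C]

/-- The commutator of `a` and `b` twisted by the scalar `ε`; the superbracket of homogeneous
elements is the case `ε = (-1) ^ (|a| |b|)`. -/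
def skewBracket (ε : R) (a b : B) : B :=
  a * b - ε • (b * a)

theorem skewBracket_neg_one (a b : B) : skewBracket (-1 : R) a b = a * b + b * a := by
  rw [skewBracket, neg_one_smul, sub_neg_eq_add]

theorem map_skewBracket (φ : B →ₐ[R] C) (ε : R) (a b : B) :
    φ (skewBracket ε a b) = skewBracket ε (φ a) (φ b) := by
  simp [skewBracket]

/-- The iterated bracket `[⋯[[y, x], x]⋯, x]` with `k` entries `x`, where the `j`-th bracket
(counted from `0`) is twisted by `ε j`. -/
def iterSkewBracket (ε : ℕ → R) (y x : B) : ℕ → B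
  | 0 => y
  | k + 1 => skewBracket (ε k) (iterSkewBracket ε y x k) x

theorem map_iterSkewBracket (φ : B →ₐ[R] C) (ε : ℕ → R) (y x : B) (k : ℕ) :
    φ (iterSkewBracket ε y x k) = iterSkewBracket ε (φ y) (φ x) k := by
  induction k with
  | zero => rfl
  | succ k ih => simp only [iterSkewBracket, map_skewBracket, ih]

theorem isFreeFamily_iterSkewBracket_ι (x : ι) (ε : ι → ℕ → R) :
    IsFreeFamily R fun p : {i // i ≠ x} × ℕ =>
      iterSkewBracket (ε p.1) (FreeAlgebra.ι R p.1.1) (FreeAlgebra.ι R x) p.2 := by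
  classical
  -- With `Y = {i // i ≠ x}`, let the free algebra on `ι` act from the right on the free algebra on
  -- `Y × ℕ`: `y ∈ Y` multiplies by the generator `(y, 0)`, and `x` acts by the skew derivation
  -- `(y, k) ↦ (y, k + 1)`. Then the `k`-fold bracket of `y` with `x` multiplies by `(y, k)`.
  set w := fun p : {i // i ≠ x} × ℕ =>
    iterSkewBracket (ε p.1) (FreeAlgebra.ι R p.1.1) (FreeAlgebra.ι R x) p.2 with hw
  let gen (y : {i // i ≠ x}) (k : ℕ) : FreeAlgebra R ({i // i ≠ x} × ℕ) := FreeAlgebra.ι R (y, k)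
  obtain ⟨D, D_ι, D_mul⟩ := exists_skewDerivation
    (FreeAlgebra.lift R fun p => ε p.1 p.2 • gen p.1 p.2) fun p => gen p.1 (p.2 + 1)
  let act : FreeAlgebra R ι →ₐ[R] (Module.End R (FreeAlgebra R ({i // i ≠ x} × ℕ)))ᵐᵒᵖ :=
    FreeAlgebra.lift R fun i => .op (if h : i = x then D else LinearMap.mulRight R (gen ⟨i, h⟩ 0))
  have act_x : act (FreeAlgebra.ι R x) = .op D := by simp [act]
  have act_iter (y : {i // i ≠ x}) (k : ℕ) (t) : (act (w (y, k))).unop t = t * gen y k := by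
    induction k generalizing t with
    | zero => simp [hw, act, iterSkewBracket, y.2]
    | succ k ih =>
      have act_w_succ : act (w (y, k + 1)) = skewBracket (ε y k) (act (w (y, k))) (.op D) := by
        rw [← act_x, ← map_skewBracket]; rfl
      simp [act_w_succ, skewBracket, ih, D_mul, gen, D_ι]
  have act_lift (q t) : (act (FreeAlgebra.lift R w q)).unop t = t * q := by
    induction q using FreeAlgebra.induction generalizing t with
    | grade0 r => simp [AlgHom.commutes, MulOpposite.algebraMap_apply, Algebra.commutes,
        Algebra.smul_def]
    | grade1 p => simpa only [FreeAlgebra.lift_ι_apply] using act_iter p.1 p.2 t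
    | mul a b ha hb => simp [ha, hb, mul_assoc]
    | add a b ha hb => simp [ha, hb, mul_add]
  intro q q' hqq'
  simpa [act_lift] using congrArg (fun u => (act u).unop 1) hqq'

/-- **Lazard elimination**, for brackets twisted by arbitrary scalars. -/
theorem IsFreeFamily.iterSkewBracket {v : ι → B} (hv : IsFreeFamily R v) (x : ι) (ε : ι → ℕ → R) :
    IsFreeFamily R fun p : {i // i ≠ x} × ℕ =>
      iterSkewBracket (ε p.1) (v p.1) (v x) p.2 := by
  simpa [Function.comp_def, map_iterSkewBracket] using (isFreeFamily_iterSkewBracket_ι x ε).map hv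

end LazardElimination

theorem linearIndependent_smul_of_mem_nonZeroDivisors {R M ι : Type*} [Ring R]
    [AddCommGroup M] [Module R M] {v : ι → M} (hv : LinearIndependent R v) {c : ι → R}
    (hc : ∀ i, c i ∈ nonZeroDivisors R) : LinearIndependent R fun i => c i • v i := by
  rw [linearIndependent_iff'] at hv ⊢
  intro s g hg i hi
  have hgc := hv s (fun i => g i * c i) (by simpa only [mul_smul] using hg) i hi
  exact (mul_right_mem_nonZeroDivisors_eq_zero_iff (hc i)).mp hgc

section SuperEvaluation

variable {A : Type*} (deg : A → ZMod 2)

/-- The sign `(-1) ^ (|s| |t|)` of the superbracket. -/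
def superSign (s t : FreeMagma A) : ℤ :=
  (-1) ^ ((degm deg s).val * (degm deg t).val)

theorem evalA_mul (s t : FreeMagma A) :
    evalA deg (s.mul t) = skewBracket (superSign deg s t) (evalA deg s) (evalA deg t) :=
  rfl

theorem evalA_iterate_mul (s t : FreeMagma A) (k : ℕ) :
    evalA deg ((fun u => u.mul t)^[k] s) =
      iterSkewBracket (fun j => superSign deg ((fun u => u.mul t)^[j] s) t)
        (evalA deg s) (evalA deg t) k := by
  induction k with
  | zero => rfl
  | succ k ih => rw [Function.iterate_succ_apply', evalA_mul, ih, iterSkewBracket]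

variable {deg} in
theorem evalA_mul_self {t : FreeMagma A} (ht : degm deg t = 1) :
    evalA deg (t.mul t) = (2 : ℤ) • evalA deg t ^ 2 := by
  have sign : superSign deg t t = -1 := by simp [superSign, ht, ZMod.val_one]
  rw [evalA_mul, sign, skewBracket_neg_one, sq, two_smul]

end SuperEvaluation

theorem wt_pos {A : Type*} (t : FreeMagma A) : 0 < t.wt := by
  induction t using FreeMagma.rec with
  | of => exact Nat.one_pos
  | mul s t hs _ => exact Nat.add_pos_left hs _

namespace HallData

open Polynomial

variable {A : Type*} [LinearOrder A] {H : HallData A}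

/-- The relation `H.le`, which is required to be a linear order only on `H.B`. -/
noncomputable instance : LinearOrder H.B where
  le s t := H.le s.1 t.1
  le_refl s := H.le_refl _ s.2
  le_trans s t u := H.le_trans _ s.2 _ t.2 _ u.2
  le_antisymm s t h h' := Subtype.ext (H.le_antisymm _ s.2 _ t.2 h h')
  le_total s t := H.le_total _ s.2 _ t.2
  toDecidableLE := Classical.decRel _

theorem induction {motive : H.B → Prop} (of : ∀ (d : H.B) (a : A), d.1 = .of a → motive d)
    (mul : ∀ d e f : H.B, d.1 = e.1.mul f.1 → motive e → motive f → motive d) (d : H.B) :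
    motive d := by
  obtain ⟨t, ht⟩ := d
  induction t using FreeMagma.rec with
  | of a => exact of _ a rfl
  | mul s t ihs iht =>
    obtain ⟨hs, ht', -⟩ := (H.mul_mem s t).mp ht
    exact mul _ ⟨s, hs⟩ ⟨t, ht'⟩ rfl (ihs hs) (iht ht')

theorem factors_unique {d e f e' f' : H.B} (h : d.1 = e.1.mul f.1) (h' : d.1 = e'.1.mul f'.1) :
    e = e' ∧ f = f' := by
  injection h.symm.trans h' with he hf
  exact ⟨Subtype.ext he, Subtype.ext hf⟩

theorem right_lt_left {d e f : H.B} (h : d.1 = e.1.mul f.1) : f < e := by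
  obtain ⟨-, -, ⟨hle, hne⟩, -⟩ := (H.mul_mem _ _).mp (h ▸ d.2)
  exact lt_of_le_of_ne hle fun hfe => hne (congrArg Subtype.val hfe)

theorem right_lt {d e f : H.B} (h : d.1 = e.1.mul f.1) : f < d := by
  have wt_lt : f.1.wt < d.1.wt := by
    rw [h]; exact Nat.lt_add_of_pos_left (wt_pos e.1)
  obtain ⟨hle, hne⟩ := H.wt_mono _ f.2 _ d.2 wt_lt
  exact lt_of_le_of_ne hle fun hfd => hne (congrArg Subtype.val hfd)

theorem right_of_left_le_right {d e f e' f' : H.B} (h : d.1 = e.1.mul f.1)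
    (he : e.1 = e'.1.mul f'.1) : f' ≤ f :=
  ((H.mul_mem _ _).mp (h ▸ d.2)).2.2.2 _ _ he

/-- A set of basic commutators containing both factors of each of its brackets. Hall's conditions
are inherited by such sets, and a finite one has only finitely many commutators to eliminate. -/
def FactorClosed (U : Set H.B) : Prop :=
  ∀ ⦃d e f : H.B⦄, d ∈ U → d.1 = e.1.mul f.1 → e ∈ U ∧ f ∈ U

theorem exists_finite_factorClosed (d : H.B) :
    ∃ U : Set H.B, U.Finite ∧ FactorClosed U ∧ d ∈ U := by
  induction d using HallData.induction with
  | of d a hd =>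
    refine ⟨{d}, Set.finite_singleton d, ?_, rfl⟩
    rintro _ e f rfl h
    cases hd.symm.trans h
  | mul d e f hd ihe ihf =>
    obtain ⟨U, hU, hUcl, he⟩ := ihe
    obtain ⟨V, hV, hVcl, hf⟩ := ihf
    refine ⟨insert d (U ∪ V), (hU.union hV).insert d, ?_, Set.mem_insert _ _⟩
    rintro d' e' f' (rfl | hd' | hd') h
    · obtain ⟨rfl, rfl⟩ := factors_unique hd h
      exact ⟨.inr (.inl he), .inr (.inr hf)⟩
    · exact (hUcl hd' h).imp (.inr ∘ .inl) (.inr ∘ .inl)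
    · exact (hVcl hd' h).imp (.inr ∘ .inr) (.inr ∘ .inr)

theorem exists_finite_factorClosed_superset {S : Set H.B} (hS : S.Finite) :
    ∃ U : Set H.B, U.Finite ∧ FactorClosed U ∧ S ⊆ U := by
  choose U hfin hcl hmem using exists_finite_factorClosed (H := H)
  refine ⟨⋃ d ∈ S, U d, hS.biUnion fun d _ => hfin d, fun d e f hd h => ?_,
    fun d hd => Set.mem_biUnion hd (hmem d)⟩
  obtain ⟨s, hs, hds⟩ := Set.mem_iUnion₂.mp hd
  exact (hcl s hds h).imp (Set.mem_biUnion hs) (Set.mem_biUnion hs)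

/-- The generators that remain after eliminating all elements of `U` smaller than `c`: the elements
of `U` from `c` on that are not brackets of two elements from `c` on. -/
def remainingGenerators (U : Set H.B) (c : H.B) : Set H.B :=
  {d | d ∈ U ∧ c ≤ d ∧ ∀ e f : H.B, d.1 = e.1.mul f.1 → f < c}

theorem self_mem_remainingGenerators {U : Set H.B} {c : H.B} (hc : c ∈ U) :
    c ∈ remainingGenerators U c :=
  ⟨hc, le_rfl, fun _ _ => right_lt⟩

theorem mem_remainingGenerators_of_eq_of {U : Set H.B} {c d : H.B} (hd : d ∈ U) (hcd : c ≤ d)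
    {a : A} (hda : d.1 = .of a) : d ∈ remainingGenerators U c :=
  ⟨hd, hcd, fun _ _ h => by cases hda.symm.trans h⟩

theorem mem_remainingGenerators_of_right_lt {U : Set H.B} {c d e f : H.B} (hd : d ∈ U)
    (hcd : c ≤ d) (hdef : d.1 = e.1.mul f.1) (hf : f < c) : d ∈ remainingGenerators U c :=
  ⟨hd, hcd, fun _ _ h => (factors_unique hdef h).2 ▸ hf⟩

theorem exists_iterate_mul_of_mem_remainingGenerators {U : Set H.B} (hU : FactorClosed U)
    {x c : H.B} (hxc : x < c) (hgap : ∀ u ∈ U, u < c → u ≤ x) {d : H.B}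
    (hd : d ∈ remainingGenerators U c) :
    ∃ y ∈ remainingGenerators U x, y ≠ x ∧ ∃ k, d.1 = (fun u => u.mul x.1)^[k] y.1 := by
  induction d using HallData.induction with
  | of d a hda =>
    obtain ⟨hdU, hcd, -⟩ := hd
    exact ⟨d, mem_remainingGenerators_of_eq_of hdU (hxc.le.trans hcd) hda,
      (hxc.trans_le hcd).ne', 0, rfl⟩
  | mul d e f hdef ihe _ =>
    obtain ⟨hdU, hcd, hdc⟩ := hd
    obtain ⟨heU, hfU⟩ := hU hdU hdef
    rcases (hgap f hfU (hdc e f hdef)).eq_or_lt with rfl | hfx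
    · have hce : c ≤ e := not_lt.mp fun hec => (hgap e heU hec).not_gt (right_lt_left hdef)
      obtain ⟨y, hy, hyx, k, hk⟩ := ihe
        ⟨heU, hce, fun _ _ he => (right_of_left_le_right hdef he).trans_lt hxc⟩
      exact ⟨y, hy, hyx, k + 1, by rw [Function.iterate_succ_apply', ← hk, hdef]⟩
    · exact ⟨d, mem_remainingGenerators_of_right_lt hdU (hxc.le.trans hcd) hdef hfx,
        (hxc.trans_le hcd).ne', 0, rfl⟩

variable (deg : A → ZMod 2)

theorem isFreeFamily_evalA_remainingGenerators_of_minimal {U : Set H.B} (hU : FactorClosed U)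
    {c : H.B} (hc : ∀ u ∈ U, c ≤ u) :
    IsFreeFamily ℤ fun d : remainingGenerators U c => evalA deg d.1.1 := by
  have exists_of (d : remainingGenerators U c) : ∃ a, d.1.1 = .of a := by
    obtain ⟨d, hdU, -, hdc⟩ := d
    cases d using HallData.induction with
    | of d a hd => exact ⟨a, hd⟩
    | mul d e f hd _ _ => exact absurd (hdc e f hd) (hc f (hU hdU hd).2).not_gt
  choose a ha using exists_of
  have a_injective : Function.Injective a := fun d d' h =>
    Subtype.ext (Subtype.ext (by rw [ha, ha, h]))
  convert! isFreeFamily_ι.comp a_injective using 2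
  rw [ha, Function.comp_apply, evalA]

theorem isFreeFamily_evalA_remainingGenerators_of_pred {U : Set H.B} (hU : FactorClosed U)
    {x c : H.B} (hx : x ∈ U) (hxc : x < c) (hgap : ∀ u ∈ U, u < c → u ≤ x)
    (hfree : IsFreeFamily ℤ fun d : remainingGenerators U x => evalA deg d.1.1) :
    IsFreeFamily ℤ fun d : remainingGenerators U c => evalA deg d.1.1 := by
  choose y hy hyx k hk using fun d : remainingGenerators U c =>
    exists_iterate_mul_of_mem_remainingGenerators hU hxc hgap d.2
  let x' : remainingGenerators U x := ⟨x, self_mem_remainingGenerators hx⟩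
  let f (d : remainingGenerators U c) : {i // i ≠ x'} × ℕ :=
    (⟨⟨y d, hy d⟩, fun h => hyx d (congrArg Subtype.val h)⟩, k d)
  have f_injective : Function.Injective f := fun d d' h => by
    simp only [f, Prod.mk.injEq, Subtype.mk.injEq] at h
    exact Subtype.ext (Subtype.ext (by rw [hk, hk, h.1, h.2]))
  convert! (hfree.iterSkewBracket x' fun i j =>
    superSign deg ((fun u => u.mul x.1)^[j] i.1.1) x.1).comp f_injective using 2
  rw [hk, evalA_iterate_mul]
  rfl

theorem isFreeFamily_evalA_remainingGenerators {U : Set H.B} (hfin : U.Finite)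
    (hU : FactorClosed U) {c : H.B} (hc : c ∈ U) :
    IsFreeFamily ℤ fun d : remainingGenerators U c => evalA deg d.1.1 := by
  refine hfin.wellFoundedOn.induction (r := (· < ·))
    (P := fun c => IsFreeFamily ℤ fun d : remainingGenerators U c => evalA deg d.1.1)
    hc fun c _ ih => ?_
  by_cases hmin : ∀ u ∈ U, c ≤ u
  · exact isFreeFamily_evalA_remainingGenerators_of_minimal deg hU hmin
  · push Not at hmin
    obtain ⟨x, ⟨hxU, hxc⟩, hx⟩ :=
      Set.exists_max_image {u | u ∈ U ∧ u < c} id (hfin.subset fun _ h => h.1) hmin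
    exact isFreeFamily_evalA_remainingGenerators_of_pred deg hU hxU hxc
      (fun u hu huc => hx u ⟨hu, huc⟩) (ih x hxU hxc)

open Classical in
/-- The evaluation of polynomials in the generators remaining at `c` that sends `c` to `X` and all
other generators to `0`. -/
noncomputable def leadingPart (U : Set H.B) (c : H.B) :
    FreeAlgebra ℤ (remainingGenerators U c) →ₐ[ℤ] ℤ[X] :=
  FreeAlgebra.lift ℤ fun d => if d.1 = c then X else 0

open Classical in
theorem exists_lift_eq_evalA {U : Set H.B} (hU : FactorClosed U) {c d : H.B} (hd : d ∈ U)
    (hcd : c ≤ d) :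
    ∃ q, FreeAlgebra.lift ℤ (fun d : remainingGenerators U c => evalA deg d.1.1) q =
      evalA deg d.1 ∧ leadingPart U c q = if d = c then X else 0 := by
  have of_generator {d : H.B} (hd : d ∈ remainingGenerators U c) :
      ∃ q, FreeAlgebra.lift ℤ (fun d : remainingGenerators U c => evalA deg d.1.1) q =
        evalA deg d.1 ∧ leadingPart U c q = if d = c then X else 0 :=
    ⟨FreeAlgebra.ι ℤ ⟨d, hd⟩, by simp, by simp [leadingPart]⟩
  induction d using HallData.induction with
  | of d a hda => exact of_generator (mem_remainingGenerators_of_eq_of hd hcd hda)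
  | mul d e f hdef ihe ihf =>
    obtain ⟨heU, hfU⟩ := hU hd hdef
    rcases lt_or_ge f c with hfc | hcf
    · exact of_generator (mem_remainingGenerators_of_right_lt hd hcd hdef hfc)
    · have hce : c < e := hcf.trans_lt (right_lt_left hdef)
      have hdc : c < d := hcf.trans_lt (right_lt hdef)
      obtain ⟨q, hq, hqc⟩ := ihe heU hce.le
      obtain ⟨r, hr, -⟩ := ihf hfU hcf
      refine ⟨skewBracket (superSign deg e.1 f.1) q r, ?_, ?_⟩
      · rw [map_skewBracket, hq, hr, hdef, evalA_mul]
      · rw [map_skewBracket, hqc, if_neg hce.ne', if_neg hdc.ne']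
        simp [skewBracket]

theorem linearIndependent_evalA_pow (H : HallData A) :
    LinearIndependent ℤ fun p : H.B × ℕ => evalA deg p.1.1 ^ (p.2 + 1) := by
  classical
  rw [linearIndependent_iff]
  intro l hl
  by_contra hne
  obtain ⟨⟨c, m⟩, hcm, hmin⟩ :=
    l.support.exists_min_image Prod.fst (Finsupp.support_nonempty_iff.mpr hne)
  obtain ⟨U, hfin, hU, hsub⟩ :=
    exists_finite_factorClosed_superset (l.support.finite_toSet.image Prod.fst)
  have mem_U {p} (hp : p ∈ l.support) : p.1 ∈ U := hsub (Set.mem_image_of_mem _ hp)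
  choose! q lift_q leadingPart_q using fun p (hp : p ∈ l.support) =>
    exists_lift_eq_evalA deg hU (mem_U hp) (hmin p hp)
  have relation : ∑ p ∈ l.support, l p • q p ^ (p.2 + 1) = 0 := by
    apply isFreeFamily_evalA_remainingGenerators deg hfin hU (mem_U hcm)
    rw [map_zero, ← hl, Finsupp.linearCombination_apply, Finsupp.sum, map_sum]
    exact Finset.sum_congr rfl fun p hp => by rw [map_smul, map_pow, lift_q p hp]
  have coeff_leadingPart (p) (hp : p ∈ l.support) :
      (leadingPart U c (l p • q p ^ (p.2 + 1))).coeff (m + 1) = if p = (c, m) then l p else 0 := by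
    rw [map_smul, map_pow, leadingPart_q p hp, coeff_smul]
    split_ifs <;> simp_all [Prod.ext_iff, coeff_X_pow, eq_comm]
  have coeff_relation := congrArg (fun r => (leadingPart U c r).coeff (m + 1)) relation
  simp only [map_sum, finsetSum_coeff, map_zero, coeff_zero] at coeff_relation
  rw [Finset.sum_congr rfl coeff_leadingPart, Finset.sum_ite_eq' _ _ _, if_pos hcm]
    at coeff_relation
  exact Finsupp.mem_support_iff.mp hcm coeff_relation

end HallData

/-- In the free associative superalgebra over `ℤ` on homogeneous generators with the
superbracket, if `C` is a complete set of basic commutators then the family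
`C ∪ {[c,c] : c ∈ C odd}` is linearly independent over `ℤ`. (Note
`evalA deg (t.mul t) = [c,c]` where `c` is the value of `t`.) -/
theorem basic_commutators_linearIndependent {A : Type*} [LinearOrder A]
    (deg : A → ZMod 2) (H : HallData A) :
    LinearIndependent ℤ
      (Sum.elim
        (fun t : {t : FreeMagma A // t ∈ H.B} => evalA deg t.1)
        (fun t : {t : FreeMagma A // t ∈ H.B ∧ degm deg t = 1} =>
          evalA deg (FreeMagma.mul t.1 t.1))) := by
  let f : {t // t ∈ H.B} ⊕ {t // t ∈ H.B ∧ degm deg t = 1} → H.B × ℕ :=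
    Sum.elim (fun t => (t, 0)) fun t => (⟨t.1, t.2.1⟩, 1)
  have f_injective : Function.Injective f := by
    rintro (⟨s, hs⟩ | ⟨s, hs⟩) (⟨t, ht⟩ | ⟨t, ht⟩) h <;> simp_all [f]
  have powers := (HallData.linearIndependent_evalA_pow deg H).comp f f_injective
  have scaled := linearIndependent_smul_of_mem_nonZeroDivisors powers
    (c := Sum.elim (fun _ => 1) fun _ => 2) (by simp)
  convert! scaled using 1
  funext i
  rcases i with t | t
  · simp [f]
  · simpa [f] using evalA_mul_self t.2.2
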